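/- Let G be a parity game and G_q its governed stuttering bisimulation quotient. If two vertices v, w of G are governed stuttering bisimilar, then v and w are won by the same player; i.e., governed stuttering bisimilarity refines winner equivalence. More precisely: if player i has a winning strategy from v and v ≈ w (governed stuttering bisimilar), then i has a winning strategy from w. -/

import Mathlib

universe u

/-- A parity game: a directed graph with a total edge relation, a priority
function and an owner function (`true` = player even, `false` = player odd). -/
structure ParityGame (V : Type u) where
  edge : V → V → Prop
  total : ∀ v, ∃ w, edge v w
  prio : V → ℕ
  owner : V → Bool

namespace ParityGame

variable {V : Type u}

/-- A (history-dependent) strategy: given the history of previously visited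
vertices and the current vertex, choose a successor.  Only the values at
vertices owned by the given player matter. -/
abbrev Strategy (V : Type u) : Type u := List V → V → V

variable (G : ParityGame V)

/-- A strategy is valid for player `i` if it always proposes edges. -/
def ValidStrategy (i : Bool) (σ : Strategy V) : Prop :=
  ∀ h v, G.owner v = i → G.edge v (σ h v)

/-- A memoryless strategy only depends on the current vertex. -/
def Memoryless (σ : Strategy V) : Prop := ∀ h h' v, σ h v = σ h' v

/-- An (infinite) play is an infinite path in the game graph. -/
def IsPlay (p : ℕ → V) : Prop := ∀ n, G.edge (p n) (p (n + 1))

/-- The history of a play before position `n`. -/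
def hist (p : ℕ → V) (n : ℕ) : List V := List.ofFn (fun k : Fin n => p k)

/-- A play is consistent with a strategy `σ` of player `i` if at every vertex
owned by `i` the play follows `σ`. -/
def Consistent (i : Bool) (σ : Strategy V) (p : ℕ → V) : Prop :=
  ∀ n, G.owner (p n) = i → p (n + 1) = σ (hist p n) (p n)

/-- `G.ForcesVia i σ v U T`: every play from `v` consistent with `σ` reaches
`T`, all earlier vertices lying in `U`. -/
def ForcesVia (i : Bool) (σ : Strategy V) (v : V) (U T : Set V) : Prop :=
  ∀ p : ℕ → V, G.IsPlay p → G.Consistent i σ p → p 0 = v →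
    ∃ n, p n ∈ T ∧ ∀ j < n, p j ∈ U

/-- `v ⇒_{i,U} T`: player `i` has a memoryless strategy forcing every
consistent play from `v` to reach `T` while staying in `U` beforehand. -/
def Forces (i : Bool) (v : V) (U T : Set V) : Prop :=
  ∃ σ : Strategy V, G.ValidStrategy i σ ∧ Memoryless σ ∧ G.ForcesVia i σ v U T

/-- Every play from `v` consistent with `σ` stays in `U` forever. -/
def DivergesVia (i : Bool) (σ : Strategy V) (v : V) (U : Set V) : Prop :=
  ∀ p : ℕ → V, G.IsPlay p → G.Consistent i σ p → p 0 = v → ∀ n, p n ∈ U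

/-- `v ⇒^ω_{i,U}`: player `i` has a memoryless strategy keeping all
consistent plays from `v` forever inside `U`. -/
def Diverges (i : Bool) (v : V) (U : Set V) : Prop :=
  ∃ σ : Strategy V, G.ValidStrategy i σ ∧ Memoryless σ ∧ G.DivergesVia i σ v U

/-- Priority `k` occurs infinitely often on the play `p`. -/
def InfOften (p : ℕ → V) (k : ℕ) : Prop := ∀ N, ∃ n, N ≤ n ∧ G.prio (p n) = k

/-- Player even wins a play iff the least priority occurring infinitely often
is even. -/
def EvenWinsPlay (p : ℕ → V) : Prop := Even (sInf {k | G.InfOften p k})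

/-- Player `i` wins the play `p`. -/
def WinsPlay (i : Bool) (p : ℕ → V) : Prop := G.EvenWinsPlay p ↔ i = true

/-- `σ` is a winning strategy for player `i` from `v`. -/
def WinningFrom (i : Bool) (σ : Strategy V) (v : V) : Prop :=
  ∀ p : ℕ → V, G.IsPlay p → G.Consistent i σ p → p 0 = v → G.WinsPlay i p

end ParityGame

namespace ParityGame

/-- The `R`-class of `v`. -/
def cls {V : Type u} (R : V → V → Prop) (v : V) : Set V := {x | R v x}

variable {V : Type u} (G : ParityGame V)

/-- Governed stuttering bisimulations. -/
def IsGSB (R : V → V → Prop) : Prop :=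
  Equivalence R ∧ ∀ v w, R v w →
    G.prio v = G.prio w ∧
    (∀ u, ¬ R v u → (∃ v', G.edge v v' ∧ R u v') →
      G.Forces (G.owner v) w (cls R w) (cls R u)) ∧
    (∀ i : Bool, G.Diverges i v (cls R v) → G.Diverges i w (cls R w))

end ParityGame

namespace ParityGame

section Helpers

variable {V : Type u} {G : ParityGame V}

theorem hist_succ (p : ℕ → V) (n : ℕ) : hist p (n + 1) = hist p n ++ [p n] := by
  unfold hist
  rw [List.ofFn_succ']
  simp [List.concat_eq_append]

theorem hist_congr {p q : ℕ → V} {n : ℕ} (h : ∀ k < n, p k = q k) : hist p n = hist q n := by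
  unfold hist
  congr 1
  funext k
  exact h k k.2

/-- Follow `q` up to position `m`, then continue with `r`. -/
def splice (q : ℕ → V) (m : ℕ) (r : ℕ → V) : ℕ → V :=
  fun k => if k ≤ m then q k else r (k - m)

theorem splice_le {q r : ℕ → V} {m k : ℕ} (h : k ≤ m) : splice q m r k = q k := by
  simp [splice, h]

theorem splice_add {q r : ℕ → V} {m : ℕ} (h0 : r 0 = q m) (k : ℕ) :
    splice q m r (m + k) = r k := by
  rcases Nat.eq_zero_or_pos k with rfl | hk
  · simp [splice, h0]
  · have : ¬ (m + k ≤ m) := by omega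
    simp [splice, this]

theorem hist_splice {q r : ℕ → V} {m : ℕ} (h0 : r 0 = q m) (k : ℕ) :
    hist (splice q m r) (m + k) = hist q m ++ hist r k := by
  induction k with
  | zero =>
    have : hist r 0 = [] := by simp [hist]
    rw [this, List.append_nil, Nat.add_zero]
    exact hist_congr fun k hk => splice_le hk.le
  | succ k ih =>
    rw [← Nat.add_assoc, hist_succ, ih, hist_succ, splice_add h0, List.append_assoc]

/-- The strategy after history `h`. -/
def shift (h : List V) (σ : Strategy V) : Strategy V := fun l x => σ (h ++ l) x

theorem shift_valid {i : Bool} {σ : Strategy V} (hσ : G.ValidStrategy i σ) (h : List V) :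
    G.ValidStrategy i (shift h σ) := fun _ v hv => hσ _ v hv

theorem splice_play {q r : ℕ → V} {m : ℕ} (h0 : r 0 = q m)
    (hq : ∀ k < m, G.edge (q k) (q (k + 1))) (hr : G.IsPlay r) :
    G.IsPlay (splice q m r) := by
  intro n
  rcases lt_or_ge n m with h | h
  · rw [splice_le h.le, splice_le (show n + 1 ≤ m from h)]
    exact hq n h
  · obtain ⟨k, rfl⟩ := Nat.exists_eq_add_of_le h
    rw [Nat.add_assoc, splice_add h0, splice_add h0]
    exact hr k

theorem splice_consistent {i : Bool} {σ : Strategy V} {q r : ℕ → V} {m : ℕ} (h0 : r 0 = q m)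
    (hq : ∀ k < m, G.owner (q k) = i → q (k + 1) = σ (hist q k) (q k))
    (hr : G.Consistent i (shift (hist q m) σ) r) :
    G.Consistent i σ (splice q m r) := by
  intro n
  rcases lt_or_ge n m with h | h
  · rw [splice_le h.le, splice_le (show n + 1 ≤ m from h),
      hist_congr (q := q) (fun k hk => splice_le (hk.trans h).le)]
    exact hq n h
  · obtain ⟨k, rfl⟩ := Nat.exists_eq_add_of_le h
    rw [Nat.add_assoc, splice_add h0, splice_add h0, hist_splice h0]
    exact hr k

/-- Two opposing valid strategies have a common play. -/
theorem exists_play {i : Bool} {σ ρ : Strategy V} (hσ : G.ValidStrategy i σ)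
    (hρ : G.ValidStrategy (!i) ρ) (v : V) :
    ∃ p, G.IsPlay p ∧ G.Consistent i σ p ∧ G.Consistent (!i) ρ p ∧ p 0 = v := by
  classical
  let s : Strategy V := fun h x => if G.owner x = i then σ h x else ρ h x
  let st : ℕ → List V × V := fun n =>
    Nat.rec ([], v) (fun _ a => (a.1 ++ [a.2], s a.1 a.2)) n
  have hs : ∀ n, st (n + 1) = ((st n).1 ++ [(st n).2], s (st n).1 (st n).2) := fun n => rfl
  let p : ℕ → V := fun n => (st n).2
  have hh : ∀ n, hist p n = (st n).1 := by
    intro n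
    induction n with
    | zero => simp [hist, st]
    | succ n ih => rw [hist_succ, ih, hs]
  have hp : ∀ n, p (n + 1) = s (hist p n) (p n) := by
    intro n
    rw [hh]
  have hno : ∀ x, G.owner x ≠ i → G.owner x = !i := by
    intro x hx
    cases i <;> cases h : G.owner x <;> simp_all
  refine ⟨p, ?_, ?_, ?_, rfl⟩
  · intro n
    rw [hp]
    by_cases h : G.owner (p n) = i
    · simp only [s, h, if_true]; exact hσ _ _ h
    · simp only [s, h, if_false]; exact hρ _ _ (hno _ h)
  · intro n h
    rw [hp]; simp only [s, h, if_true]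
  · intro n h
    have h' : ¬ G.owner (p n) = i := by rw [h]; cases i <;> simp
    rw [hp]; simp only [s, h', if_false]

variable (G) in
/-- Some memoryless valid strategy exists. -/
theorem exists_default (i : Bool) : ∃ σ : Strategy V, G.ValidStrategy i σ ∧ Memoryless σ :=
  ⟨fun _ v => (G.total v).choose, fun _ v _ => (G.total v).choose_spec, fun _ _ _ => rfl⟩

variable (G) in
/-- Layers of the attractor of player `i` to the complement of `U`. -/
def Layer (i : Bool) (U : Set V) : ℕ → V → Prop
  | 0, x => x ∉ U
  | n + 1, x => Layer i U n x ∨ (G.owner x = i ∧ ∃ y, G.edge x y ∧ Layer i U n y) ∨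
      (G.owner x ≠ i ∧ ∀ y, G.edge x y → Layer i U n y)

theorem Layer.mono {i : Bool} {U : Set V} {n m : ℕ} (h : n ≤ m) {x : V}
    (hx : G.Layer i U n x) : G.Layer i U m x := by
  induction h with
  | refl => exact hx
  | step _ ih => exact Or.inl ih

/-- Positional determinacy of safety games. -/
theorem safety_det [Finite V] (i : Bool) (x : V) (U : Set V) :
    G.Diverges (!i) x U ∨ ∃ τ : Strategy V, G.ValidStrategy i τ ∧ Memoryless τ ∧
      ∀ p, G.IsPlay p → G.Consistent i τ p → p 0 = x → ∃ n, p n ∉ U := by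
  classical
  by_cases hx : ∃ n, G.Layer i U n x
  · right
    have hch : ∀ y, ∃ z, G.edge y z ∧ ∀ n, G.owner y = i → G.Layer i U (n + 1) y →
        ¬ G.Layer i U n y → G.Layer i U n z := by
      intro y
      by_cases hy : ∃ n, G.owner y = i ∧ G.Layer i U (n + 1) y ∧ ¬ G.Layer i U n y
      · obtain ⟨n, h1, h2, h3⟩ := hy
        rcases h2 with h2 | ⟨_, z, hz, hl⟩ | ⟨h2, _⟩
        · exact absurd h2 h3
        · refine ⟨z, hz, fun m _ h5 h6 => ?_⟩
          have : n ≤ m := by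
            by_contra hlt
            exact h3 (h5.mono (by omega))
          exact hl.mono this
        · exact absurd h1 h2
      · obtain ⟨z, hz⟩ := G.total y
        exact ⟨z, hz, fun n h1 h2 h3 => absurd ⟨n, h1, h2, h3⟩ hy⟩
    choose f hf hf' using hch
    refine ⟨fun _ y => f y, fun _ y _ => hf y, fun _ _ _ => rfl, ?_⟩
    intro p hp hc h0
    obtain ⟨n, hn⟩ := hx
    have key : ∀ n k, G.Layer i U n (p k) → ∃ m, p m ∉ U := by
      intro n
      induction n with
      | zero => exact fun k hk => ⟨k, hk⟩
      | succ n ih =>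
        intro k hk
        by_cases hk' : G.Layer i U n (p k)
        · exact ih k hk'
        · apply ih (k + 1)
          by_cases ho : G.owner (p k) = i
          · rw [hc k ho]
            exact hf' _ n ho hk hk'
          · rcases hk with h | ⟨h, _⟩ | ⟨_, h⟩
            · exact absurd h hk'
            · exact absurd h ho
            · exact h _ (hp k)
    exact key n 0 (h0 ▸ hn)
  · left
    have hch : ∀ y, ∃ z, G.edge y z ∧
        (G.owner y = (!i) → (¬ ∃ n, G.Layer i U n y) → ¬ ∃ n, G.Layer i U n z) := by
      intro y
      by_contra hcon
      push Not at hcon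
      obtain ⟨z, hz⟩ := G.total y
      obtain ⟨ho, hy, -⟩ := hcon z hz
      have hall : ∀ z, ∃ n, G.edge y z → G.Layer i U n z := by
        intro z
        by_cases hz : G.edge y z
        · obtain ⟨n, hn⟩ := (hcon z hz).2.2
          exact ⟨n, fun _ => hn⟩
        · exact ⟨0, fun h => absurd h hz⟩
      choose N hN using hall
      obtain ⟨M, hM⟩ := (Set.finite_range N).bddAbove
      refine hy (M + 1) (Or.inr (Or.inr ⟨?_, fun z hz => (hN z hz).mono (hM ⟨z, rfl⟩)⟩))
      rw [ho]; cases i <;> simp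
    choose f hf hf' using hch
    refine ⟨fun _ y => f y, fun _ y _ => hf y, fun _ _ _ => rfl, ?_⟩
    intro p hp hc h0
    have key : ∀ n, ¬ ∃ k, G.Layer i U k (p n) := by
      intro n
      induction n with
      | zero => rwa [h0]
      | succ n ih =>
        by_cases ho : G.owner (p n) = i
        · rintro ⟨k, hk⟩
          exact ih ⟨k + 1, Or.inr (Or.inl ⟨ho, _, hp n, hk⟩)⟩
        · have ho' : G.owner (p n) = !i := by
            revert ho; cases i <;> cases G.owner (p n) <;> simp
          rw [hc n ho']
          exact hf' _ ho' ih
    intro n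
    by_contra hn
    exact key n ⟨0, hn⟩

variable (G) in
/-- Some `σ`-play from `u` stays in the class of `u`. -/
def SimStay (R : V → V → Prop) (i : Bool) (σ : Strategy V) (u : V) : Prop :=
  ∃ q, G.IsPlay q ∧ G.Consistent i σ q ∧ q 0 = u ∧ ∀ n, R u (q n)

variable (G) in
/-- Some `σ`-play from `u` moves through the class of `u` to the class of `y`. -/
def SimExit (R : V → V → Prop) (i : Bool) (σ : Strategy V) (u y : V) : Prop :=
  ∃ q, G.IsPlay q ∧ G.Consistent i σ q ∧ q 0 = u ∧ ∃ m, (∀ j < m, R u (q j)) ∧ R y (q m)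

theorem first_exit {R : V → V → Prop} {u : V} {p : ℕ → V} (h0 : R u (p 0))
    (h : ¬ ∀ n, R u (p n)) : ∃ n, (∀ j ≤ n, R u (p j)) ∧ ¬ R u (p (n + 1)) := by
  classical
  push Not at h
  have hs := Nat.find_spec h
  have hm := fun k => Nat.find_min h (m := k)
  generalize Nat.find h = N at hs hm
  cases N with
  | zero => exact absurd h0 hs
  | succ n => exact ⟨n, fun j hj => not_not.1 (hm j (by omega)), hs⟩

theorem exit_unique {R : V → V → Prop} (hR : Equivalence R) {u y x0 : V} {p : ℕ → V} {n k : ℕ}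
    (hux : R u x0)
    (h1 : ∀ j ≤ n, R u (p j)) (h2 : ¬ R u (p (n + 1))) (hy : ¬ R u y)
    (h3 : p k ∈ cls R y) (h4 : ∀ j < k, p j ∈ cls R x0) : k = n + 1 := by
  have h3' : R y (p k) := h3
  rcases lt_trichotomy k (n + 1) with h | h | h
  · exact absurd (hR.trans (h1 k (by omega)) (hR.symm h3')) hy
  · exact h
  · exact absurd (hR.trans hux (h4 _ h)) h2

theorem local_strategy [Finite V] {R : V → V → Prop} (hG : G.IsGSB R) {i : Bool}
    {σ : Strategy V} (hσ : G.ValidStrategy i σ) {u x0 : V} (hux : R u x0) :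
    ∃ τ : Strategy V, G.ValidStrategy i τ ∧ Memoryless τ ∧
      ∀ p, G.IsPlay p → G.Consistent i τ p → p 0 = x0 →
        ((∀ n, R u (p n)) → G.SimStay R i σ u) ∧
        ∀ n, (∀ j ≤ n, R u (p j)) → ¬ R u (p (n + 1)) → G.SimExit R i σ u (p (n + 1)) := by
  obtain ⟨hR, hT⟩ := hG
  have hno : ∀ x, G.owner x ≠ i → G.owner x = !i := by
    intro x hx
    cases i <;> cases h : G.owner x <;> simp_all
  -- forcing from an exit
  have hforce : ∀ x y z, R u x → R u z → G.edge x y → ¬ R u y →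
      G.Forces (G.owner x) z (cls R z) (cls R y) := by
    intro x y z hx hz he hy
    exact (hT x z (hR.trans (hR.symm hx) hz)).2.1 y (fun h => hy (hR.trans hx h))
      ⟨y, he, hR.refl y⟩
  have hopp : ∀ x y, R u x → G.owner x = (!i) → G.edge x y → ¬ R u y →
      G.SimExit R i σ u y := by
    intro x y hx ho he hy
    obtain ⟨ρ, hρ, -, hf⟩ := hforce x y u hx (hR.refl u) he hy
    rw [ho] at hρ hf
    obtain ⟨q, hq, hc, hc', h0⟩ := exists_play hσ hρ u
    obtain ⟨m, hm, hm'⟩ := hf q hq hc' h0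
    exact ⟨q, hq, hc, h0, m, hm', hm⟩
  have hexit : ∀ y y', R y y' → G.SimExit R i σ u y → G.SimExit R i σ u y' := by
    rintro y y' hyy ⟨q, hq, hc, h0, m, hm, hm'⟩
    exact ⟨q, hq, hc, h0, m, hm, hR.trans (hR.symm hyy) hm'⟩
  by_cases case1 : ∃ x y, R u x ∧ G.owner x = i ∧ G.edge x y ∧ ¬ R u y ∧ G.SimExit R i σ u y
  · obtain ⟨x, y, hx, ho, he, hy, hE⟩ := case1
    obtain ⟨τ, hτ, hm, hf⟩ := hforce x y x0 hx hux he hy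
    rw [ho] at hτ hf
    refine ⟨τ, hτ, hm, fun p hp hc h0 => ⟨fun hall => ?_, fun n h1 h2 => ?_⟩⟩
    · obtain ⟨k, hk, -⟩ := hf p hp hc h0
      exact absurd (hR.trans (hall k) (hR.symm hk)) hy
    · obtain ⟨k, hk, hk'⟩ := hf p hp hc h0
      have := exit_unique hR hux h1 h2 hy hk hk'
      subst this
      exact hexit _ _ hk hE
  · by_cases case2 : ∃ x y, R u x ∧ G.owner x = (!i) ∧ G.edge x y ∧ ¬ R u y
    · obtain ⟨x, y, hx, ho, he, hy⟩ := case2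
      have hE := hopp x y hx ho he hy
      have hnoi : ∀ x' y', R u x' → G.owner x' = i → G.edge x' y' → R u y' := by
        intro x' y' hx' ho' he'
        by_contra hy'
        apply case1
        refine ⟨x', y', hx', ho', he', hy', hexit y y' ?_ hE⟩
        obtain ⟨ρ, hρ, -, hf⟩ := hforce x y u hx (hR.refl u) he hy
        obtain ⟨τ, hτ, -, hf'⟩ := hforce x' y' u hx' (hR.refl u) he' hy'
        rw [ho] at hρ hf
        rw [ho'] at hτ hf'
        obtain ⟨q, hq, hc, hc', h0⟩ := exists_play hτ hρ u
        obtain ⟨m, hm, hm'⟩ := hf q hq hc' h0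
        obtain ⟨k, hk, hk'⟩ := hf' q hq hc h0
        have h1 : R y (q m) := hm
        have h2 : R y' (q k) := hk
        rcases lt_trichotomy m k with h | h | h
        · exact absurd (hR.trans (hk' m h) (hR.symm h1)) hy
        · subst h; exact hR.trans h1 (hR.symm h2)
        · exact absurd (hR.trans (hm' k h) (hR.symm h2)) hy'
      have hb : ∀ p, G.IsPlay p → ∀ n, (∀ j ≤ n, R u (p j)) → ¬ R u (p (n + 1)) →
          G.SimExit R i σ u (p (n + 1)) := by
        intro p hp n h1 h2
        by_cases hown : G.owner (p n) = i
        · exact absurd (hnoi _ _ (h1 n le_rfl) hown (hp n)) h2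
        · exact hopp _ _ (h1 n le_rfl) (hno _ hown) (hp n) h2
      rcases safety_det (G := G) i x0 (cls R x0) with hd | ⟨τ, hτ, hm, hf⟩
      · obtain ⟨τ, hτ, hm⟩ := exists_default G i
        refine ⟨τ, hτ, hm, fun p hp hc h0 => ⟨fun _ => ?_, hb p hp⟩⟩
        obtain ⟨ρ, hρ, -, hf⟩ := (hT x0 u (hR.symm hux)).2.2 _ hd
        obtain ⟨q, hq, hc, hc', h0⟩ := exists_play hσ hρ u
        exact ⟨q, hq, hc, h0, hf q hq hc' h0⟩
      · refine ⟨τ, hτ, hm, fun p hp hc h0 => ⟨fun hall => ?_, hb p hp⟩⟩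
        obtain ⟨n, hn⟩ := hf p hp hc h0
        exact absurd (hR.trans (hR.symm hux) (hall n)) hn
    · have hstay : ∀ q, G.IsPlay q → G.Consistent i σ q → q 0 = u → ∀ n, R u (q n) := by
        intro q hq hc h0
        by_contra hcon
        obtain ⟨n, h1, h2⟩ := first_exit (by rw [h0]; exact hR.refl u) hcon
        by_cases hown : G.owner (q n) = i
        · exact case1 ⟨q n, q (n + 1), h1 n le_rfl, hown, hq n, h2, q, hq, hc, h0, n + 1,
            fun j hj => h1 j (by omega), hR.refl _⟩
        · exact case2 ⟨q n, q (n + 1), h1 n le_rfl, hno _ hown, hq n, h2⟩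
      have hdu : G.Diverges i u (cls R u) := by
        rcases safety_det (G := G) (!i) u (cls R u) with hd | ⟨ρ, hρ, -, hf⟩
        · simpa using hd
        · obtain ⟨q, hq, hc, hc', h0⟩ := exists_play hσ hρ u
          obtain ⟨n, hn⟩ := hf q hq hc' h0
          exact absurd (hstay q hq hc h0 n) hn
      obtain ⟨τ, hτ, hm, hf⟩ := (hT u x0 hux).2.2 i hdu
      refine ⟨τ, hτ, hm, fun p hp hc h0 => ⟨fun _ => ?_, fun n h1 h2 => ?_⟩⟩
      · obtain ⟨ρ, hρ, -⟩ := exists_default G (!i)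
        obtain ⟨q, hq, hc, hc', h0⟩ := exists_play hσ hρ u
        exact ⟨q, hq, hc, h0, hstay q hq hc h0⟩
      · exact absurd (hR.trans hux (hf p hp hc h0 (n + 1))) h2

variable (G) in
/-- The property required of the local strategy `τ`, for plays that follow `τ` long enough. -/
def GoodLocal (R : V → V → Prop) (i : Bool) (σ : Strategy V) (u x0 : V) (τ : V → V) : Prop :=
  (∀ x, G.owner x = i → G.edge x (τ x)) ∧
  (∀ p, G.IsPlay p → p 0 = x0 → (∀ n, G.owner (p n) = i → p (n + 1) = τ (p n)) →
    (∀ n, R u (p n)) → G.SimStay R i σ u) ∧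
  ∀ p, G.IsPlay p → p 0 = x0 → ∀ n, (∀ k ≤ n, G.owner (p k) = i → p (k + 1) = τ (p k)) →
    (∀ j ≤ n, R u (p j)) → ¬ R u (p (n + 1)) → G.SimExit R i σ u (p (n + 1))

theorem local_good [Finite V] {R : V → V → Prop} (hG : G.IsGSB R) {i : Bool}
    {σ : Strategy V} (hσ : G.ValidStrategy i σ) {u x0 : V} (hux : R u x0) :
    ∃ τ : V → V, G.GoodLocal R i σ u x0 τ := by
  obtain ⟨τ, hτ, hm, h⟩ := local_strategy hG hσ hux
  refine ⟨fun x => τ [] x, fun x hx => hτ _ x hx, fun p hp h0 hc => ?_,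
    fun p hp h0 n hc h1 h2 => ?_⟩
  · exact (h p hp (fun n hn => (hc n hn).trans (hm _ _ _)) h0).1
  · obtain ⟨ρ, hρ, -⟩ := exists_default G (!i)
    obtain ⟨r, hr, hrc, -, hr0⟩ := exists_play (shift_valid hτ (hist p (n + 1))) hρ (p (n + 1))
    have hs := (h (splice p (n + 1) r) (splice_play hr0 (fun k _ => hp k) hr)
      (splice_consistent hr0 (fun k hk ho => (hc k (by omega) ho).trans (hm _ _ _)) hrc)
      ((splice_le (by omega)).trans h0)).2 n
    rw [splice_le le_rfl] at hs
    exact hs (fun j hj => by rw [splice_le (by omega)]; exact h1 j hj) h2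

variable (G) in
/-- The simulated play `q'` extends `q` beyond `m`, through the class of `q m`, up to
position `m'` in the class of `y`. -/
def Extends (R : V → V → Prop) (i : Bool) (σ : Strategy V) (v : V) (q : ℕ → V) (m : ℕ) (y : V)
    (a : (ℕ → V) × ℕ) : Prop :=
  (G.IsPlay a.1 ∧ G.Consistent i σ a.1 ∧ a.1 0 = v) ∧ m < a.2 ∧ (∀ k ≤ m, a.1 k = q k) ∧
    (∀ k, m ≤ k → k < a.2 → R (q m) (a.1 k)) ∧ R (a.1 a.2) y

theorem extends_of_exit {R : V → V → Prop} (hR : Equivalence R) {i : Bool} {σ : Strategy V}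
    {v : V} {q : ℕ → V} {m : ℕ} {y : V}
    (hq : G.IsPlay q ∧ G.Consistent i σ q ∧ q 0 = v) (hy : ¬ R (q m) y)
    (hE : G.SimExit R i (shift (hist q m) σ) (q m) y) :
    ∃ a, G.Extends R i σ v q m y a := by
  obtain ⟨r, hr, hc, h0, l, hl, hly⟩ := hE
  have hlpos : 0 < l := by
    rcases Nat.eq_zero_or_pos l with rfl | h
    · rw [h0] at hly; exact absurd (hR.symm hly) hy
    · exact h
  refine ⟨(splice q m r, m + l), ⟨splice_play h0 (fun k _ => hq.1 k) hr,
    splice_consistent h0 (fun k _ => hq.2.1 k) hc,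
      (splice_le (q := q) (r := r) (Nat.zero_le m)).trans hq.2.2⟩,
    by simpa using hlpos, fun k hk => splice_le hk, fun k hk hk' => ?_, ?_⟩
  · obtain ⟨j, rfl⟩ := Nat.exists_eq_add_of_le hk
    simp only [splice_add h0]
    exact hl j (by simpa using hk')
  · simp only [splice_add h0]
    exact hR.symm hly

open Classical in
variable (G) in
/-- Memory update: simulated play, current position in it, entry point of the current class. -/
noncomputable def upd (R : V → V → Prop) (i : Bool) (σ : Strategy V) (v : V)
    (M : ((ℕ → V) × ℕ) × V) (y : V) : ((ℕ → V) × ℕ) × V :=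
  if R (M.1.1 M.1.2) y then M
  else if h : ∃ a, G.Extends R i σ v M.1.1 M.1.2 y a then (h.choose, y) else M

open Classical in
variable (G) in
/-- The move proposed in a memory state. -/
noncomputable def act (R : V → V → Prop) (i : Bool) (σ : Strategy V)
    (M : ((ℕ → V) × ℕ) × V) : V → V :=
  if h : ∃ τ, G.GoodLocal R i (shift (hist M.1.1 M.1.2) σ) (M.1.1 M.1.2) M.2 τ then h.choose
  else fun x => (G.total x).choose

theorem act_edge {R : V → V → Prop} {i : Bool} {σ : Strategy V} (M : ((ℕ → V) × ℕ) × V)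
    (x : V) (hx : G.owner x = i) : G.edge x (G.act R i σ M x) := by
  unfold act
  split_ifs with h
  · exact h.choose_spec.1 x hx
  · exact (G.total x).choose_spec

theorem act_good [Finite V] {R : V → V → Prop} (hG : G.IsGSB R) {i : Bool}
    {σ : Strategy V} (hσ : G.ValidStrategy i σ) {M : ((ℕ → V) × ℕ) × V}
    (h : R (M.1.1 M.1.2) M.2) :
    G.GoodLocal R i (shift (hist M.1.1 M.1.2) σ) (M.1.1 M.1.2) M.2 (G.act R i σ M) := by
  have h' := local_good hG (shift_valid hσ (hist M.1.1 M.1.2)) h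
  unfold act
  rw [dif_pos h']
  exact h'.choose_spec

theorem winsPlay_congr {i : Bool} {p q : ℕ → V} (h : ∀ k, G.InfOften p k ↔ G.InfOften q k) :
    G.WinsPlay i q → G.WinsPlay i p := by
  have : {k | G.InfOften p k} = {k | G.InfOften q k} := Set.ext h
  unfold WinsPlay EvenWinsPlay
  rw [this]
  exact id

end Helpers

end ParityGame

/-- Governed stuttering bisimilarity refines winner equivalence: if `v` and
`w` are related by some governed stuttering bisimulation and player `i` has a
winning strategy from `v`, then `i` has a winning strategy from `w`. -/
theorem gsb_refines_winner {V : Type u} [Fintype V] (G : ParityGame V) :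
    ∀ v w : V, (∃ R : V → V → Prop, G.IsGSB R ∧ R v w) →
      ∀ i : Bool,
        (∃ σ : ParityGame.Strategy V, G.ValidStrategy i σ ∧ G.WinningFrom i σ v) →
        ∃ σ : ParityGame.Strategy V, G.ValidStrategy i σ ∧ G.WinningFrom i σ w := by
  classical
  rintro v w ⟨R, hG, hvw⟩ i ⟨σ, hσ, hwin⟩
  have hR := hG.1
  obtain ⟨ρ, hρ, -⟩ := ParityGame.exists_default G (!i)
  obtain ⟨q0, hq0, hc0, -, hq00⟩ := ParityGame.exists_play hσ hρ v
  let M0 : ((ℕ → V) × ℕ) × V := ((q0, 0), w)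
  let F : List V → ((ℕ → V) × ℕ) × V := fun l => l.foldl (G.upd R i σ v) M0
  refine ⟨fun h x => G.act R i σ (F (h ++ [x])) x, fun h x hx => ParityGame.act_edge _ x hx, ?_⟩
  intro p hp hc h0
  let M : ℕ → ((ℕ → V) × ℕ) × V := fun n => F (ParityGame.hist p n ++ [p n])
  have hMs : ∀ n, M (n + 1) = G.upd R i σ v (M n) (p (n + 1)) := by
    intro n
    simp only [M, F]
    rw [List.foldl_append, ParityGame.hist_succ]
    rfl
  have hM0 : M 0 = M0 := by
    simp [M, F, ParityGame.hist, ParityGame.upd, M0, h0, hq00, hvw]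
  have hact : ∀ n, G.owner (p n) = i → p (n + 1) = G.act R i σ (M n) (p n) := fun n hn => hc n hn
  -- one-step update, given the invariant
  have hInv : ∀ n, (G.IsPlay (M n).1.1 ∧ G.Consistent i σ (M n).1.1 ∧ (M n).1.1 0 = v) ∧
      R ((M n).1.1 (M n).1.2) (p n) ∧ R ((M n).1.1 (M n).1.2) (M n).2 ∧
      (∃ t ≤ n, p t = (M n).2 ∧ ∀ k, t ≤ k → k ≤ n → M k = M n ∧
        R ((M n).1.1 (M n).1.2) (p k)) ∧
      (R ((M n).1.1 (M n).1.2) (p (n + 1)) ∧ M (n + 1) = M n ∨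
        ¬ R ((M n).1.1 (M n).1.2) (p (n + 1)) ∧
        G.Extends R i σ v (M n).1.1 (M n).1.2 (p (n + 1)) (M (n + 1)).1 ∧
          (M (n + 1)).2 = p (n + 1)) := by
    intro n
    -- the last part follows from the others
    have last : ∀ n, (G.IsPlay (M n).1.1 ∧ G.Consistent i σ (M n).1.1 ∧ (M n).1.1 0 = v) →
        R ((M n).1.1 (M n).1.2) (M n).2 →
        (∃ t ≤ n, p t = (M n).2 ∧ ∀ k, t ≤ k → k ≤ n → M k = M n ∧
          R ((M n).1.1 (M n).1.2) (p k)) →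
        (R ((M n).1.1 (M n).1.2) (p (n + 1)) ∧ M (n + 1) = M n ∨
        ¬ R ((M n).1.1 (M n).1.2) (p (n + 1)) ∧
        G.Extends R i σ v (M n).1.1 (M n).1.2 (p (n + 1)) (M (n + 1)).1 ∧
          (M (n + 1)).2 = p (n + 1)) := by
      rintro n h1 h2 ⟨t, ht, hpt, hk⟩
      by_cases hr : R ((M n).1.1 (M n).1.2) (p (n + 1))
      · left
        refine ⟨hr, ?_⟩
        rw [hMs]; unfold ParityGame.upd; rw [if_pos hr]
      · right
        refine ⟨hr, ?_⟩
        obtain ⟨d, rfl⟩ := Nat.exists_eq_add_of_le ht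
        have hE := (ParityGame.act_good hG hσ h2).2.2 (fun j => p (t + j)) (fun j => hp (t + j)) hpt d
          (fun k hkd ho => by
            have := hact (t + k) ho
            rw [(hk (t + k) (by omega) (by omega)).1] at this
            exact this)
          (fun j hj => (hk (t + j) (by omega) (by omega)).2) hr
        have hex := ParityGame.extends_of_exit hR h1 hr hE
        have heq : M (t + d + 1) = (hex.choose, p (t + d + 1)) := by
          rw [hMs]; unfold ParityGame.upd; rw [if_neg hr, dif_pos hex]
        rw [heq]
        exact ⟨hex.choose_spec, rfl⟩
    induction n with
    | zero =>
      have a1 : G.IsPlay (M 0).1.1 ∧ G.Consistent i σ (M 0).1.1 ∧ (M 0).1.1 0 = v := by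
        rw [hM0]; exact ⟨hq0, hc0, hq00⟩
      have a2 : R ((M 0).1.1 (M 0).1.2) (M 0).2 := by
        rw [hM0]; show R (q0 0) w; rw [hq00]; exact hvw
      have a0 : p 0 = (M 0).2 := by rw [hM0]; exact h0
      have a3 : R ((M 0).1.1 (M 0).1.2) (p 0) := by rw [a0]; exact a2
      have a4 : ∃ t ≤ 0, p t = (M 0).2 ∧ ∀ k, t ≤ k → k ≤ 0 → M k = M 0 ∧
          R ((M 0).1.1 (M 0).1.2) (p k) := by
        refine ⟨0, le_rfl, a0, fun k _ hk => ?_⟩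
        obtain rfl : k = 0 := by omega
        exact ⟨rfl, a3⟩
      exact ⟨a1, a3, a2, a4, last 0 a1 a2 a4⟩
    | succ n ih =>
      obtain ⟨b1, b2, b3, ⟨t, ht, hpt, hk⟩, hstep⟩ := ih
      rcases hstep with ⟨hr, heq⟩ | ⟨hr, hext, hx⟩
      · have a4 : ∃ t ≤ n + 1, p t = (M (n + 1)).2 ∧ ∀ k, t ≤ k → k ≤ n + 1 → M k = M (n + 1) ∧
            R ((M (n + 1)).1.1 (M (n + 1)).1.2) (p k) := by
          refine ⟨t, by omega, by rw [heq]; exact hpt, fun k hk1 hk2 => ?_⟩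
          rcases Nat.lt_or_ge n k with h | h
          · obtain rfl : k = n + 1 := by omega
            rw [heq]; exact ⟨rfl, hr⟩
          · rw [heq]; exact hk k hk1 h
        have a1 := b1
        have a2 := b3
        have a3 := hr
        rw [← heq] at a1 a2 a3
        exact ⟨a1, a3, a2, a4, last _ a1 a2 a4⟩
      · have a3 := hext.2.2.2.2
        have a2 := a3
        rw [← hx] at a2
        have a4 : ∃ t ≤ n + 1, p t = (M (n + 1)).2 ∧ ∀ k, t ≤ k → k ≤ n + 1 → M k = M (n + 1) ∧
            R ((M (n + 1)).1.1 (M (n + 1)).1.2) (p k) := by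
          refine ⟨n + 1, le_rfl, hx.symm, fun k hk1 hk2 => ?_⟩
          obtain rfl : k = n + 1 := by omega
          exact ⟨rfl, a3⟩
        exact ⟨hext.1, a3, a2, a4, last _ hext.1 a2 a4⟩
  have hprio : ∀ a b, R a b → G.prio a = G.prio b := fun a b h => (hG.2 a b h).1
  by_cases hfin : ∃ N, ∀ n ≥ N, R ((M n).1.1 (M n).1.2) (p (n + 1))
  · -- the play eventually stays in one class
    obtain ⟨N, hN⟩ := hfin
    have hconst : ∀ n ≥ N, M n = M N := by
      intro n hn
      induction n, hn using Nat.le_induction with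
      | base => rfl
      | succ n hn ih =>
        rcases (hInv n).2.2.2.2 with ⟨_, h⟩ | ⟨h, _⟩
        · rw [h, ih]
        · exact absurd (hN n hn) h
    obtain ⟨b1, b2, b3, ⟨t, ht, hpt, hk⟩, -⟩ := hInv N
    have hk' : ∀ k ≥ t, M k = M N ∧ R ((M N).1.1 (M N).1.2) (p k) := by
      intro k hkt
      rcases le_total k N with h | h
      · exact hk k hkt h
      · have e := hconst k h
        refine ⟨e, ?_⟩
        have := (hInv k).2.1
        rwa [e] at this
    obtain ⟨r, hr, hrc, hr0, hrs⟩ := (ParityGame.act_good hG hσ b3).2.1 (fun j => p (t + j))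
      (fun j => hp (t + j)) hpt
      (fun n ho => by
        have := hact (t + n) ho
        rw [(hk' (t + n) (by omega)).1] at this
        exact this)
      (fun n => (hk' (t + n) (by omega)).2)
    have hw := hwin (ParityGame.splice (M N).1.1 (M N).1.2 r) (ParityGame.splice_play hr0 (fun k _ => b1.1 k) hr)
      (ParityGame.splice_consistent hr0 (fun k _ => b1.2.1 k) hrc)
      ((ParityGame.splice_le (Nat.zero_le _)).trans b1.2.2)
    have hclass : ∀ (s : ℕ → V) (T : ℕ), (∀ n ≥ T, R ((M N).1.1 (M N).1.2) (s n)) →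
        ∀ k, G.InfOften s k ↔ k = G.prio ((M N).1.1 (M N).1.2) := by
      intro s T hs k
      constructor
      · intro h
        obtain ⟨n, hn, rfl⟩ := h T
        exact (hprio _ _ (hs n hn)).symm
      · rintro rfl T'
        exact ⟨max T T', le_max_right _ _, (hprio _ _ (hs _ (le_max_left _ _))).symm⟩
    refine ParityGame.winsPlay_congr (fun k => ?_) hw
    rw [hclass p t (fun n hn => (hk' n hn).2), hclass _ (M N).1.2]
    intro n hn
    obtain ⟨j, rfl⟩ := Nat.exists_eq_add_of_le hn
    rw [ParityGame.splice_add hr0]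
    exact hrs j
  · push Not at hfin
    -- infinitely many class changes
    have hmono1 : ∀ n, (M n).1.2 ≤ (M (n + 1)).1.2 := by
      intro n
      rcases (hInv n).2.2.2.2 with ⟨_, h⟩ | ⟨_, h, _⟩
      · rw [h]
      · exact h.2.1.le
    have hmono : Monotone (fun n => (M n).1.2) := monotone_nat_of_le_succ hmono1
    have hagree1 : ∀ n, ∀ k ≤ (M n).1.2, (M (n + 1)).1.1 k = (M n).1.1 k := by
      intro n k hkn
      rcases (hInv n).2.2.2.2 with ⟨_, h⟩ | ⟨_, h, _⟩
      · rw [h]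
      · exact h.2.2.1 k hkn
    have hagree : ∀ n n', n ≤ n' → ∀ k ≤ (M n).1.2, (M n').1.1 k = (M n).1.1 k := by
      intro n n' hn
      induction n', hn using Nat.le_induction with
      | base => exact fun _ _ => rfl
      | succ n' hn ih =>
        intro k hkn
        rw [hagree1 n' k (hkn.trans (hmono hn)), ih k hkn]
    have hunb : ∀ K, ∃ n, K ≤ (M n).1.2 := by
      intro K
      induction K with
      | zero => exact ⟨0, Nat.zero_le _⟩
      | succ K ih =>
        obtain ⟨n, hn⟩ := ih
        obtain ⟨n', hn', hr⟩ := hfin n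
        refine ⟨n' + 1, ?_⟩
        rcases (hInv n').2.2.2.2 with ⟨h, _⟩ | ⟨_, h, _⟩
        · exact absurd h hr
        · have h1 : (M n).1.2 ≤ (M n').1.2 := hmono hn'
          have h2 := h.2.1
          omega
    choose g hg using hunb
    let Q : ℕ → V := fun k => (M (g k)).1.1 k
    have hQ : ∀ n k, k ≤ (M n).1.2 → Q k = (M n).1.1 k := by
      intro n k hkn
      rcases le_total n (g k) with h | h
      · exact hagree _ _ h k hkn
      · exact (hagree _ _ h k (hg k)).symm
    have hQplay : G.IsPlay Q := by
      intro n
      rw [hQ (g (n + 1)) n ((Nat.le_succ n).trans (hg _)), hQ (g (n + 1)) (n + 1) (hg _)]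
      exact (hInv _).1.1 n
    have hQc : G.Consistent i σ Q := by
      intro n
      rw [hQ (g (n + 1)) n ((Nat.le_succ n).trans (hg _)), hQ (g (n + 1)) (n + 1) (hg _),
        ParityGame.hist_congr (q := (M (g (n + 1))).1.1)
          (fun k hkn => hQ (g (n + 1)) k ((by omega : k ≤ n + 1).trans (hg _)))]
      exact (hInv _).1.2.1 n
    have hw := hwin Q hQplay hQc (hInv _).1.2.2
    refine ParityGame.winsPlay_congr (fun k => ⟨fun h T => ?_, fun h T => ?_⟩) hw
    · obtain ⟨n, hn, rfl⟩ := h (g T)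
      refine ⟨(M n).1.2, (hg T).trans (hmono hn), ?_⟩
      rw [hQ n _ le_rfl]
      exact hprio _ _ (hInv n).2.1
    · obtain ⟨l, hl, rfl⟩ := h (M T).1.2
      have hex : ∃ n, l < (M n).1.2 := ⟨g (l + 1), hg (l + 1)⟩
      have hs := Nat.find_spec hex
      have hm := fun k => Nat.find_min hex (m := k)
      generalize Nat.find hex = n' at hs hm
      have hTn : T < n' := by
        by_contra hcon
        have : (M n').1.2 ≤ (M T).1.2 := hmono (not_lt.1 hcon)
        omega
      obtain ⟨n, rfl⟩ : ∃ n, n' = n + 1 := ⟨n' - 1, by omega⟩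
      have hle : (M n).1.2 ≤ l := not_lt.1 (hm n (by omega))
      refine ⟨n, by omega, ?_⟩
      rw [hQ (n + 1) l hs.le]
      rcases (hInv n).2.2.2.2 with ⟨_, h⟩ | ⟨_, h, _⟩
      · rw [h] at hs; omega
      · exact (hprio _ _ (hInv n).2.1).symm.trans (hprio _ _ (h.2.2.2.1 l hle hs))
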